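/- First-order tail estimate for the skewed combination (display (1.10)/(1stNdOr)): there exist K > 0 and w₀ > 0 such that for all w ≥ w₀, |w·(P(U ≥ V and M·U + G·V ≥ w) − C·M^Y/(Y·w^Y))| ≤ K·(w^{1−2Y} + w^{−Y}); in particular w·(P(U ≥ V, M·U + G·V ≥ w) − C·M^Y/(Y·w^Y)) = O(w^{1−2Y}) + O(w^{−Y}) as w → ∞. -/

import Mathlib

open MeasureTheory ProbabilityTheory Filter Topology Asymptotics Set

/-!
Fourier inversion along the upper imaginary half-axis writes the density of `U` as the imaginary
part of `∫ exp (x z + κ z ^ Y) dz / π`, where `κ = C Γ(-Y)`. For `x > 0` the contour may be turned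
to the angle `3π/4`, where both `exp (x z)` and `exp (κ z ^ Y)` decay; expanding `exp (κ z ^ Y)` to
first order there turns the three terms into Gamma integrals, of which the constant one is real, the
linear one is `C x ^ (-Y - 1)` by the reflection formula, and the remainder is `O(x ^ (-2Y - 1))`.
Integrating, `P(U ≥ x) = C / Y * x ^ (-Y) + O(x ^ (-2Y))`.

Conditionally on `V = v`, the event says that `U` exceeds `T v = max v ((w - G v) / M)`. This
threshold is at least `w / (M + G)` and differs from `w / M` by at most a multiple of `|v|`, so the
tail of `U` at `T v` is the tail at `w / M` up to `O(w ^ (-Y - 1) |v|) + O(w ^ (-2Y))`, which is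
integrated against the law of `V` using `E|V| < ∞`.
-/

open scoped Real FourierTransform

theorem integral_horizontal_line_eq {F : ℂ → ℂ} {H : ℝ → ℝ} {a b : ℝ}
    (hF : ∀ x : ℝ, ∀ y ∈ uIcc a b, DifferentiableAt ℂ F (x + y * Complex.I))
    (hH : ∀ x : ℝ, ∀ y ∈ uIcc a b, ‖F (x + y * Complex.I)‖ ≤ H x)
    (hbot : Tendsto H atBot (𝓝 0)) (htop : Tendsto H atTop (𝓝 0))
    (ha : Integrable fun x : ℝ => F (x + a * Complex.I))
    (hb : Integrable fun x : ℝ => F (x + b * Complex.I)) :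
    ∫ x : ℝ, F (x + a * Complex.I) = ∫ x : ℝ, F (x + b * Complex.I) := by
  have vertical_tendsto {l : Filter ℝ} (hl : Tendsto H l (𝓝 0)) :
      Tendsto (fun x : ℝ => Complex.I • ∫ y in a..b, F (x + y * Complex.I)) l (𝓝 0) := by
    refine squeeze_zero_norm (fun x => ?_) (by simpa using hl.mul_const |b - a|)
    rw [norm_smul, Complex.norm_I, one_mul]
    exact intervalIntegral.norm_integral_le_of_norm_le_const fun y hy =>
      hH x y (uIoc_subset_uIcc hy)
  have rectangle (T : ℝ) := Complex.integral_boundary_rect_eq_zero_of_differentiableOn F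
    (-T + a * Complex.I) (T + b * Complex.I) fun z hz => by
      have him : z.im ∈ uIcc a b := by simpa using (Complex.mem_reProdIm.1 hz).2
      simpa using (hF z.re z.im him).differentiableWithinAt
  have horizontal_tendsto {c : ℝ} (hc : Integrable fun x : ℝ => F (x + c * Complex.I)) :=
    intervalIntegral_tendsto_integral hc tendsto_neg_atTop_atBot tendsto_id
  have limit := (((horizontal_tendsto ha).sub (horizontal_tendsto hb)).add
    (vertical_tendsto htop)).sub ((vertical_tendsto hbot).comp tendsto_neg_atTop_atBot)
  rw [add_zero, sub_zero] at limit
  refine sub_eq_zero.1 (tendsto_nhds_unique limit (tendsto_const_nhds.congr fun T => ?_))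
  simpa using (rectangle T).symm

theorem integral_comp_exp (g : ℝ → ℂ) :
    ∫ x, Real.exp x • g (Real.exp x) = ∫ s in Ioi 0, g s := by
  simpa [abs_of_pos, Real.exp_pos] using
    (integral_image_eq_integral_abs_deriv_smul MeasurableSet.univ
      (fun x _ => (Real.hasDerivAt_exp x).hasDerivWithinAt) Real.exp_injective.injOn g).symm

theorem integrable_comp_exp_iff {g : ℝ → ℂ} :
    (Integrable fun x => Real.exp x • g (Real.exp x)) ↔ IntegrableOn g (Ioi 0) := by
  simpa [abs_of_pos, Real.exp_pos] using
    (integrableOn_image_iff_integrableOn_abs_deriv_smul MeasurableSet.univ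
      (fun x _ => (Real.hasDerivAt_exp x).hasDerivWithinAt) Real.exp_injective.injOn g).symm

/-- The contour integral of `f` along the ray `{s * exp (θ * I) | s > 0}`, oriented away from
`0`. -/
noncomputable def rayIntegral (f : ℂ → ℂ) (θ : ℝ) : ℂ :=
  ∫ s : ℝ in Ioi 0, f (s * Complex.exp (θ * Complex.I)) * Complex.exp (θ * Complex.I)

/-- Absolute convergence of `rayIntegral f θ`. -/
def RayIntegrable (f : ℂ → ℂ) (θ : ℝ) : Prop :=
  IntegrableOn (fun s : ℝ => f (s * Complex.exp (θ * Complex.I)) * Complex.exp (θ * Complex.I))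
    (Ioi 0)

theorem RayIntegrable.sub {f g : ℂ → ℂ} {θ : ℝ} (hf : RayIntegrable f θ)
    (hg : RayIntegrable g θ) : RayIntegrable (fun z => f z - g z) θ := by
  simpa only [RayIntegrable, sub_mul, Pi.sub_def] using IntegrableOn.sub hf hg

theorem RayIntegrable.const_mul {f : ℂ → ℂ} {θ : ℝ} (hf : RayIntegrable f θ) (c : ℂ) :
    RayIntegrable (fun z => c * f z) θ := by
  simpa only [RayIntegrable, IntegrableOn, mul_assoc] using Integrable.const_mul hf c

theorem rayIntegral_sub {f g : ℂ → ℂ} {θ : ℝ} (hf : RayIntegrable f θ) (hg : RayIntegrable g θ) :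
    rayIntegral (fun z => f z - g z) θ = rayIntegral f θ - rayIntegral g θ := by
  simpa only [rayIntegral, sub_mul] using integral_sub hf hg

theorem rayIntegral_const_mul (c : ℂ) (f : ℂ → ℂ) (θ : ℝ) :
    rayIntegral (fun z => c * f z) θ = c * rayIntegral f θ := by
  simp only [rayIntegral, mul_assoc, integral_const_mul]

theorem norm_rayIntegral_le_of_norm_le {f : ℂ → ℂ} {B : ℝ → ℝ} {θ : ℝ}
    (hB : ∀ s : ℝ, 0 < s → ‖f (s * Complex.exp (θ * Complex.I))‖ ≤ B s)
    (hBi : IntegrableOn B (Ioi 0)) : ‖rayIntegral f θ‖ ≤ ∫ s in Ioi 0, B s := by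
  refine norm_integral_le_of_norm_le hBi ?_
  filter_upwards [ae_restrict_mem measurableSet_Ioi] with s hs
  simpa [Complex.norm_exp_ofReal_mul_I] using hB s hs

theorem RayIntegrable.of_norm_le {f : ℂ → ℂ} {B : ℝ → ℝ} {θ : ℝ}
    (hf : ∀ s : ℝ, 0 < s → ContinuousAt f (s * Complex.exp (θ * Complex.I)))
    (hB : ∀ s : ℝ, 0 < s → ‖f (s * Complex.exp (θ * Complex.I))‖ ≤ B s)
    (hBi : IntegrableOn B (Ioi 0)) :
    RayIntegrable f θ := by
  refine hBi.mono' (ContinuousOn.aestronglyMeasurable (fun s hs => ?_) measurableSet_Ioi) ?_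
  · exact (((hf s hs).comp (f := fun s : ℝ => (s : ℂ) * Complex.exp (θ * Complex.I))
      (by fun_prop)).mul continuousAt_const).continuousWithinAt
  · filter_upwards [ae_restrict_mem measurableSet_Ioi] with s hs
    simpa [Complex.norm_exp_ofReal_mul_I] using hB s hs

theorem rayIntegral_eq_of_norm_le {f : ℂ → ℂ} {B : ℝ → ℝ} {a b : ℝ}
    (hf : ∀ θ ∈ uIcc a b, ∀ s : ℝ, 0 < s → DifferentiableAt ℂ f (s * Complex.exp (θ * Complex.I)))
    (hB : ∀ θ ∈ uIcc a b, ∀ s : ℝ, 0 < s → ‖f (s * Complex.exp (θ * Complex.I))‖ ≤ B s)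
    (hBi : IntegrableOn B (Ioi 0)) (hzero : Tendsto (fun s => s * B s) (𝓝[>] 0) (𝓝 0))
    (htop : Tendsto (fun s => s * B s) atTop (𝓝 0)) :
    rayIntegral f a = rayIntegral f b := by
  let F (w : ℂ) : ℂ := f (Complex.exp w) * Complex.exp w
  have polar (x θ : ℝ) :
      Complex.exp (x + θ * Complex.I) = Real.exp x * Complex.exp (θ * Complex.I) := by
    rw [Complex.exp_add, Complex.ofReal_exp]
  have F_eq (x θ : ℝ) : F (x + θ * Complex.I) = Real.exp x •
      (f (Real.exp x * Complex.exp (θ * Complex.I)) * Complex.exp (θ * Complex.I)) := by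
    simp only [F, polar, Complex.real_smul]; ring
  have line_eq (θ : ℝ) : ∫ x : ℝ, F (x + θ * Complex.I) = rayIntegral f θ := by
    simp only [F_eq]
    exact integral_comp_exp fun s : ℝ =>
      f (s * Complex.exp (θ * Complex.I)) * Complex.exp (θ * Complex.I)
  have integrable {θ : ℝ} (hθ : θ ∈ uIcc a b) : Integrable fun x : ℝ => F (x + θ * Complex.I) := by
    simp only [F_eq]
    exact (integrable_comp_exp_iff (g := fun s : ℝ =>
      f (s * Complex.exp (θ * Complex.I)) * Complex.exp (θ * Complex.I))).2
      (RayIntegrable.of_norm_le (fun s hs => (hf θ hθ s hs).continuousAt) (hB θ hθ) hBi)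
  have lines := integral_horizontal_line_eq (F := F) (a := a) (b := b)
    (H := fun x => Real.exp x * B (Real.exp x))
    (fun x θ hθ => ?_) (fun x θ hθ => ?_)
    (hzero.comp Real.tendsto_exp_atBot_nhdsGT) (htop.comp Real.tendsto_exp_atTop)
    (integrable left_mem_uIcc) (integrable right_mem_uIcc)
  · exact (line_eq a).symm.trans (lines.trans (line_eq b))
  · have hdiff := hf θ hθ _ (Real.exp_pos x)
    rw [← polar] at hdiff
    exact (hdiff.comp _ Complex.differentiableAt_exp).mul Complex.differentiableAt_exp
  · rw [F_eq, norm_smul, norm_mul, Complex.norm_exp_ofReal_mul_I, mul_one, Real.norm_eq_abs,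
      Real.abs_exp]
    exact mul_le_mul_of_nonneg_left (hB θ hθ _ (Real.exp_pos x)) (Real.exp_pos x).le

theorem tendsto_rpow_mul_exp_neg_mul_rpow_nhdsGT_zero {p q : ℝ} (b : ℝ) (hp : 0 < p)
    (hq : 0 < q) : Tendsto (fun s : ℝ => s ^ p * Real.exp (-b * s ^ q)) (𝓝[>] 0) (𝓝 0) := by
  have hcont : Continuous fun s : ℝ => s ^ p * Real.exp (-b * s ^ q) := by
    fun_prop (disch := positivity)
  simpa [Real.zero_rpow, hp.ne', hq.ne'] using (hcont.tendsto 0).mono_left nhdsWithin_le_nhds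

theorem tendsto_rpow_mul_exp_neg_mul_rpow_atTop {q b : ℝ} (p : ℝ) (hq : 0 < q) (hb : 0 < b) :
    Tendsto (fun s : ℝ => s ^ p * Real.exp (-b * s ^ q)) atTop (𝓝 0) := by
  refine ((tendsto_rpow_mul_exp_neg_mul_atTop_nhds_zero (p / q) b hb).comp
    (tendsto_rpow_atTop hq)).congr' ?_
  filter_upwards [eventually_gt_atTop 0] with s hs
  rw [Function.comp_apply, ← Real.rpow_mul hs.le, mul_div_cancel₀ _ hq.ne']

theorem rayIntegral_eq_of_norm_le_rpow_mul_exp {f : ℂ → ℂ} {p q r a b : ℝ}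
    (hp : -1 < p) (hq : 0 < q) (hr : 0 < r)
    (hf : ∀ θ ∈ uIcc a b, ∀ s : ℝ, 0 < s →
      DifferentiableAt ℂ f (s * Complex.exp (θ * Complex.I)))
    (hB : ∀ θ ∈ uIcc a b, ∀ s : ℝ, 0 < s →
      ‖f (s * Complex.exp (θ * Complex.I))‖ ≤ s ^ p * Real.exp (-r * s ^ q)) :
    rayIntegral f a = rayIntegral f b := by
  have mul_bound {s : ℝ} (hs : 0 < s) :
      s ^ (p + 1) * Real.exp (-r * s ^ q) = s * (s ^ p * Real.exp (-r * s ^ q)) := by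
    rw [Real.rpow_add_one hs.ne']; ring
  refine rayIntegral_eq_of_norm_le hf hB (integrableOn_rpow_mul_exp_neg_mul_rpow hp hq hr) ?_ ?_
  · refine (tendsto_rpow_mul_exp_neg_mul_rpow_nhdsGT_zero (p := p + 1) r (by linarith) hq).congr' ?_
    filter_upwards [self_mem_nhdsWithin] with s hs using mul_bound hs
  · refine (tendsto_rpow_mul_exp_neg_mul_rpow_atTop (p + 1) hq hr).congr' ?_
    filter_upwards [eventually_gt_atTop 0] with s hs using mul_bound hs

theorem ofReal_mul_exp_cpow {s θ : ℝ} (hs : 0 < s) (hθ : θ ∈ Ioc (-π) π) (p : ℝ) :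
    (s * Complex.exp (θ * Complex.I)) ^ (p : ℂ) =
      (s ^ p : ℝ) * Complex.exp ((p * θ : ℝ) * Complex.I) := by
  have polar : s * Complex.exp (θ * Complex.I) = Complex.exp (Real.log s + θ * Complex.I) := by
    rw [Complex.exp_add, ← Complex.ofReal_exp, Real.exp_log hs]
  have hlog : Complex.log (Complex.exp (Real.log s + θ * Complex.I)) = Real.log s + θ * Complex.I :=
    Complex.log_exp (by simpa using hθ.1) (by simpa using hθ.2)
  rw [polar, Complex.cpow_def_of_ne_zero (Complex.exp_ne_zero _), hlog, Real.rpow_def_of_pos hs,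
    Complex.ofReal_exp, ← Complex.exp_add]
  push_cast
  ring_nf

theorem ofReal_mul_exp_mem_slitPlane {s θ : ℝ} (hs : 0 < s) (hθ : θ ∈ Ioo (-π) π) :
    s * Complex.exp (θ * Complex.I) ∈ Complex.slitPlane := by
  refine Complex.mem_slitPlane_iff_arg.2 ⟨?_, by simp [hs.ne']⟩
  rw [Complex.exp_mul_I, Complex.arg_mul_cos_add_sin_mul_I hs (Ioo_subset_Ioc_self hθ)]
  exact hθ.2.ne

theorem ofReal_mul_exp_re (s θ : ℝ) :
    (s * Complex.exp (θ * Complex.I)).re = s * Real.cos θ := by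
  rw [Complex.re_ofReal_mul, Complex.exp_ofReal_mul_I_re]

theorem norm_ofReal_mul_exp_cpow {s : ℝ} (hs : 0 ≤ s) (θ p : ℝ) :
    ‖(s * Complex.exp (θ * Complex.I)) ^ (p : ℂ)‖ = s ^ p := by
  rw [Complex.norm_cpow_real, norm_mul, Complex.norm_exp_ofReal_mul_I, mul_one, Complex.norm_real,
    Real.norm_of_nonneg hs]

theorem rayIntegral_cpow_mul_exp_neg {p r φ : ℝ} (hp : -1 < p) (hr : 0 < r)
    (hφ : |φ| < π / 2) :
    rayIntegral (fun z => z ^ (p : ℂ) * Complex.exp (-(r * z))) φ =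
      (Real.Gamma (p + 1) * r ^ (-(p + 1)) : ℝ) := by
  have abs_le {θ : ℝ} (hθ : θ ∈ uIcc φ 0) : |θ| ≤ |φ| := by
    simpa using abs_sub_right_of_mem_uIcc hθ
  rw [rayIntegral_eq_of_norm_le_rpow_mul_exp (b := 0) (r := r * Real.cos φ) hp one_pos
    (mul_pos hr (Real.cos_pos_of_mem_Ioo (abs_lt.1 hφ)))]
  · have gamma := Real.integral_rpow_mul_exp_neg_mul_Ioi (a := p + 1) (by linarith) hr
    rw [add_sub_cancel_right, one_div, Real.inv_rpow hr.le, ← Real.rpow_neg hr.le,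
      mul_comm] at gamma
    rw [← gamma]
    refine Eq.trans (setIntegral_congr_fun measurableSet_Ioi fun s hs => ?_) integral_ofReal
    simp [Complex.ofReal_cpow (mem_Ioi.1 hs).le]
  · intro θ hθ s hs
    have := abs_lt.1 ((abs_le hθ).trans_lt hφ)
    have hslit := ofReal_mul_exp_mem_slitPlane hs (θ := θ) ⟨by linarith, by linarith⟩
    exact (differentiableAt_id.cpow_const hslit).mul (by fun_prop)
  · intro θ hθ s hs
    have hle := abs_le hθ
    have habs := abs_lt.1 (hle.trans_lt hφ)
    have hcos : Real.cos φ ≤ Real.cos θ := by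
      rw [← Real.cos_abs φ, ← Real.cos_abs θ]
      exact Real.cos_le_cos_of_nonneg_of_le_pi (abs_nonneg θ) (by linarith) hle
    rw [norm_mul, norm_ofReal_mul_exp_cpow hs.le, Complex.norm_exp, Complex.neg_re,
      Complex.re_ofReal_mul, ofReal_mul_exp_re, Real.rpow_one]
    gcongr
    nlinarith [mul_pos hr hs]

theorem rayIntegral_cpow_mul_exp {p x α : ℝ} (hp : -1 < p) (hx : 0 < x)
    (hα : α ∈ Ioc (π / 2) π) :
    rayIntegral (fun z => z ^ (p : ℂ) * Complex.exp (x * z)) α =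
      Complex.exp ((π * (p + 1) : ℝ) * Complex.I) *
        (Real.Gamma (p + 1) * x ^ (-(p + 1)) : ℝ) := by
  have hpi := Real.pi_pos
  have hφ : |α - π| < π / 2 :=
    abs_lt.2 ⟨by linarith [hα.1], by linarith [hα.2]⟩
  rw [← rayIntegral_cpow_mul_exp_neg hp hx hφ, rayIntegral, rayIntegral, ← integral_const_mul]
  refine setIntegral_congr_fun measurableSet_Ioi fun s hs => ?_
  have half_turn : Complex.exp ((α - π : ℝ) * Complex.I) = -Complex.exp (α * Complex.I) := by
    rw [Complex.ofReal_sub, sub_mul, Complex.exp_sub_pi_mul_I]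
  have phase : Complex.exp ((p * α : ℝ) * Complex.I) =
      -(Complex.exp ((π * (p + 1) : ℝ) * Complex.I) *
        Complex.exp ((p * (α - π) : ℝ) * Complex.I)) := by
    rw [← Complex.exp_add, ← Complex.exp_sub_pi_mul_I]
    push_cast
    ring_nf
  simp only [ofReal_mul_exp_cpow hs ⟨by linarith [hα.1], hα.2⟩,
    ofReal_mul_exp_cpow (θ := α - π) hs ⟨by linarith [hα.1], by linarith [hα.2]⟩]
  rw [half_turn, phase]
  ring_nf

theorem norm_exp_sub_one_le_of_re_nonpos {z : ℂ} (hz : z.re ≤ 0) : ‖Complex.exp z - 1‖ ≤ ‖z‖ := by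
  simpa using Convex.norm_image_sub_le_of_norm_hasDerivWithin_le (C := 1)
    (fun w _ => (Complex.hasDerivAt_exp w).hasDerivWithinAt)
    (fun w hw => by rw [Complex.norm_exp]; exact Real.exp_le_one_iff.2 hw)
    (convex_halfSpace_re_le 0) (show (0 : ℂ) ∈ {w : ℂ | w.re ≤ 0} by simp) hz

theorem norm_exp_sub_one_sub_id_le_of_re_nonpos {z : ℂ} (hz : z.re ≤ 0) :
    ‖Complex.exp z - 1 - z‖ ≤ 2 * ‖z‖ ^ 2 := by
  rcases le_total ‖z‖ 1 with h | h
  · linarith [Complex.norm_exp_sub_one_sub_id_le h, sq_nonneg ‖z‖]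
  · nlinarith [norm_exp_sub_one_le_of_re_nonpos hz, norm_sub_le (Complex.exp z - 1) z]

theorem exists_cos_mul_le_neg {Y : ℝ} (hY : Y ∈ Ioo (1 : ℝ) 2) :
    ∃ c > 0, ∀ θ ∈ Icc (π / 2) (3 * π / 4), Real.cos (Y * θ) ≤ -c := by
  have hpi := Real.pi_pos
  obtain ⟨t, ht, hmax⟩ := (isCompact_Icc (a := π / 2) (b := 3 * π / 4)).exists_isMaxOn
    ⟨π / 2, by constructor <;> linarith⟩
    (show Continuous fun θ => Real.cos (Y * θ) by fun_prop).continuousOn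
  refine ⟨-Real.cos (Y * t), neg_pos.2 (Real.cos_neg_of_pi_div_two_lt_of_lt ?_ ?_), fun θ hθ => ?_⟩
  · nlinarith [hY.1, ht.1]
  · nlinarith [hY.2, ht.1, ht.2]
  · simpa using hmax hθ

/-- `stableDensity κ Y x` is the density at `x` of the law with characteristic function
`t ↦ exp (κ * (-i t) ^ Y)`, written as the Laplace inversion integral of `z ↦ exp (κ * z ^ Y)`
over the upper imaginary half-axis; the lower half-axis contributes the complex conjugate. -/
noncomputable def stableDensity (κ Y x : ℝ) : ℝ :=
  π⁻¹ * (rayIntegral (fun z => Complex.exp (x * z + κ * z ^ (Y : ℂ))) (π / 2)).im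

section StableDensity

variable {κ Y x : ℝ}

theorem differentiableAt_exp_add_mul_cpow {z : ℂ} (hz : z ∈ Complex.slitPlane) :
    DifferentiableAt ℂ (fun z => Complex.exp (x * z + κ * z ^ (Y : ℂ))) z :=
  ((differentiableAt_id.const_mul (x : ℂ)).add
    ((differentiableAt_id.cpow_const hz).const_mul (κ : ℂ))).cexp

theorem norm_exp_add_mul_cpow {s θ : ℝ} (hs : 0 < s) (hθ : θ ∈ Ioc (-π) π) :
    ‖Complex.exp (x * (s * Complex.exp (θ * Complex.I)) +
        κ * (s * Complex.exp (θ * Complex.I)) ^ (Y : ℂ))‖ =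
      Real.exp (x * (s * Real.cos θ) + κ * (s ^ Y * Real.cos (Y * θ))) := by
  rw [ofReal_mul_exp_cpow hs hθ, Complex.norm_exp, Complex.add_re, Complex.re_ofReal_mul,
    ofReal_mul_exp_re, Complex.re_ofReal_mul, ofReal_mul_exp_re]

theorem rayIntegral_exp_add_mul_cpow_eq (hκ : 0 < κ) (hY : Y ∈ Ioo (1 : ℝ) 2) (hx : 0 ≤ x) :
    rayIntegral (fun z => Complex.exp (x * z + κ * z ^ (Y : ℂ))) (π / 2) =
      rayIntegral (fun z => Complex.exp (x * z + κ * z ^ (Y : ℂ))) (3 * π / 4) := by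
  have hpi := Real.pi_pos
  have hle : π / 2 ≤ 3 * π / 4 := by linarith
  obtain ⟨c, hc, hcos⟩ := exists_cos_mul_le_neg hY
  refine rayIntegral_eq_of_norm_le_rpow_mul_exp (p := 0) (q := Y) (r := κ * c) (by norm_num)
    (by linarith [hY.1]) (mul_pos hκ hc) (fun θ hθ s hs => ?_) (fun θ hθ s hs => ?_)
  all_goals rw [uIcc_of_le hle] at hθ
  · exact differentiableAt_exp_add_mul_cpow
      (ofReal_mul_exp_mem_slitPlane hs ⟨by linarith [hθ.1], by linarith [hθ.2]⟩)
  · rw [norm_exp_add_mul_cpow hs ⟨by linarith [hθ.1], by linarith [hθ.2]⟩, Real.rpow_zero, one_mul,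
      Real.exp_le_exp]
    have hcosθ : Real.cos θ ≤ 0 :=
      Real.cos_nonpos_of_pi_div_two_le_of_le hθ.1 (by linarith [hθ.2])
    have hlin : x * (s * Real.cos θ) ≤ 0 :=
      mul_nonpos_of_nonneg_of_nonpos hx (mul_nonpos_of_nonneg_of_nonpos hs.le hcosθ)
    have hpow : κ * (s ^ Y * Real.cos (Y * θ)) ≤ κ * (s ^ Y * -c) := by
      gcongr; exact hcos θ hθ
    linarith

theorem rayIntegrable_cpow_mul_exp {p x α : ℝ} (hp : -1 < p) (hx : 0 < x)
    (hα : α ∈ Ioo (π / 2) π) :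
    RayIntegrable (fun z => z ^ (p : ℂ) * Complex.exp (x * z)) α := by
  have hcos : Real.cos α < 0 :=
    Real.cos_neg_of_pi_div_two_lt_of_lt hα.1 (by linarith [hα.2, Real.pi_pos])
  refine .of_norm_le
    (B := fun s => s ^ p * Real.exp (-(x * -Real.cos α) * s ^ (1 : ℝ)))
    (fun s hs => ?_) (fun s hs => ?_)
    (integrableOn_rpow_mul_exp_neg_mul_rpow hp one_pos (mul_pos hx (neg_pos.2 hcos)))
  · have hslit := ofReal_mul_exp_mem_slitPlane hs (θ := α) ⟨by linarith [hα.1, Real.pi_pos], hα.2⟩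
    exact (differentiableAt_id.cpow_const hslit).continuousAt.mul (by fun_prop)
  · rw [norm_mul, norm_ofReal_mul_exp_cpow hs.le, Complex.norm_exp, Complex.re_ofReal_mul,
      ofReal_mul_exp_re, Real.rpow_one]
    refine le_of_eq ?_
    ring_nf

theorem rayIntegrable_exp_add_mul_cpow {α : ℝ} (hκ : 0 ≤ κ) (hx : 0 < x)
    (hα : α ∈ Ioo (π / 2) π) (hYα : Real.cos (Y * α) ≤ 0) :
    RayIntegrable (fun z => Complex.exp (x * z + κ * z ^ (Y : ℂ))) α := by
  have hpi := Real.pi_pos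
  have hcos : Real.cos α < 0 :=
    Real.cos_neg_of_pi_div_two_lt_of_lt hα.1 (by linarith [hα.2])
  refine .of_norm_le (B := fun s => Real.exp (x * Real.cos α * s)) (fun s hs => ?_) (fun s hs => ?_)
    (integrableOn_exp_mul_Ioi (mul_neg_of_pos_of_neg hx hcos) 0)
  · have hslit := ofReal_mul_exp_mem_slitPlane hs (θ := α) ⟨by linarith [hα.1], hα.2⟩
    exact (differentiableAt_exp_add_mul_cpow hslit).continuousAt
  · rw [norm_exp_add_mul_cpow hs ⟨by linarith [hα.1], hα.2.le⟩, Real.exp_le_exp]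
    have hpow : κ * (s ^ Y * Real.cos (Y * α)) ≤ 0 :=
      mul_nonpos_of_nonneg_of_nonpos hκ (mul_nonpos_of_nonneg_of_nonpos (by positivity) hYα)
    linarith

theorem norm_exp_mul_taylor_remainder_le {s α : ℝ} (hκ : 0 ≤ κ) (hs : 0 < s)
    (hα : α ∈ Ioc (-π) π) (hYα : Real.cos (Y * α) ≤ 0) :
    ‖Complex.exp (x * (s * Complex.exp (α * Complex.I))) *
        (Complex.exp (κ * (s * Complex.exp (α * Complex.I)) ^ (Y : ℂ)) - 1 -
          κ * (s * Complex.exp (α * Complex.I)) ^ (Y : ℂ))‖ ≤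
      2 * κ ^ 2 * (s ^ (2 * Y) * Real.exp (-(x * -Real.cos α) * s ^ (1 : ℝ))) := by
  have hre : (κ * (s * Complex.exp (α * Complex.I)) ^ (Y : ℂ)).re ≤ 0 := by
    rw [ofReal_mul_exp_cpow hs hα, Complex.re_ofReal_mul, ofReal_mul_exp_re]
    exact mul_nonpos_of_nonneg_of_nonpos hκ (mul_nonpos_of_nonneg_of_nonpos (by positivity) hYα)
  have hnorm : ‖κ * (s * Complex.exp (α * Complex.I)) ^ (Y : ℂ)‖ = κ * s ^ Y := by
    rw [norm_mul, norm_ofReal_mul_exp_cpow hs.le, Complex.norm_real, Real.norm_of_nonneg hκ]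
  have taylor := norm_exp_sub_one_sub_id_le_of_re_nonpos hre
  rw [hnorm] at taylor
  rw [norm_mul, Complex.norm_exp, Complex.re_ofReal_mul, ofReal_mul_exp_re, Real.rpow_one,
    mul_comm 2 Y, Real.rpow_mul hs.le, Real.rpow_two]
  calc _ ≤ Real.exp (x * (s * Real.cos α)) * (2 * (κ * s ^ Y) ^ 2) := by gcongr
    _ = _ := by ring_nf

theorem norm_rayIntegral_sub_le {α : ℝ} (hκ : 0 ≤ κ) (h2Y : -1 < 2 * Y) (hY : -1 < Y) (hx : 0 < x)
    (hα : α ∈ Ioo (π / 2) π) (hYα : Real.cos (Y * α) ≤ 0) :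
    ‖rayIntegral (fun z => Complex.exp (x * z + κ * z ^ (Y : ℂ))) α -
        rayIntegral (fun z => z ^ ((0 : ℝ) : ℂ) * Complex.exp (x * z)) α -
        κ * rayIntegral (fun z => z ^ (Y : ℂ) * Complex.exp (x * z)) α‖ ≤
      2 * κ ^ 2 * ((x * -Real.cos α) ^ (-(2 * Y + 1)) * Real.Gamma (2 * Y + 1)) := by
  have hpi := Real.pi_pos
  have hcos : Real.cos α < 0 :=
    Real.cos_neg_of_pi_div_two_lt_of_lt hα.1 (by linarith [hα.2])
  have hrate : 0 < x * -Real.cos α := mul_pos hx (neg_pos.2 hcos)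
  have hint := rayIntegrable_exp_add_mul_cpow hκ hx hα hYα
  have hint₀ := rayIntegrable_cpow_mul_exp (p := 0) (by norm_num) hx hα
  have hintY := (rayIntegrable_cpow_mul_exp hY hx hα).const_mul (κ : ℂ)
  have gamma := integral_rpow_mul_exp_neg_mul_rpow one_pos h2Y hrate
  rw [div_one, div_one, div_one, mul_one] at gamma
  rw [← rayIntegral_const_mul, ← rayIntegral_sub hint hint₀,
    ← rayIntegral_sub (hint.sub hint₀) hintY, ← gamma, ← integral_const_mul]
  refine norm_rayIntegral_le_of_norm_le (fun s hs => le_trans (le_of_eq ?_)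
    (norm_exp_mul_taylor_remainder_le hκ hs ⟨by linarith [hα.1], hα.2.le⟩ hYα))
    ((integrableOn_rpow_mul_exp_neg_mul_rpow h2Y one_pos hrate).const_mul _)
  rw [Complex.ofReal_zero, Complex.cpow_zero, Complex.exp_add]
  ring_nf

theorem exists_abs_stableDensity_sub_le (hκ : 0 < κ) (hY : Y ∈ Ioo (1 : ℝ) 2) :
    ∃ E, ∀ x > 0, |stableDensity κ Y x -
        -(κ * Real.Gamma (Y + 1) * Real.sin (π * Y) / π) * x ^ (-(Y + 1))| ≤
      E * x ^ (-(2 * Y + 1)) := by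
  have hpi := Real.pi_pos
  have hα : 3 * π / 4 ∈ Ioo (π / 2) π := ⟨by linarith, by linarith⟩
  have hYα : Real.cos (Y * (3 * π / 4)) ≤ 0 :=
    Real.cos_nonpos_of_pi_div_two_le_of_le (by nlinarith [hY.1]) (by nlinarith [hY.2])
  have hcos : 0 < -Real.cos (3 * π / 4) :=
    neg_pos.2 (Real.cos_neg_of_pi_div_two_lt_of_lt hα.1 (by linarith))
  refine ⟨π⁻¹ * (2 * κ ^ 2 *
    ((-Real.cos (3 * π / 4)) ^ (-(2 * Y + 1)) * Real.Gamma (2 * Y + 1))), fun x hx => ?_⟩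
  have him := (Complex.abs_im_le_norm _).trans
    (norm_rayIntegral_sub_le hκ.le (by linarith [hY.1]) (by linarith [hY.1]) hx hα hYα)
  rw [rayIntegral_cpow_mul_exp (by norm_num) hx (Ioo_subset_Ioc_self hα),
    rayIntegral_cpow_mul_exp (by linarith [hY.1]) hx (Ioo_subset_Ioc_self hα), Complex.sub_im,
    Complex.sub_im, Complex.im_mul_ofReal, Complex.im_ofReal_mul, Complex.im_mul_ofReal,
    Complex.exp_ofReal_mul_I_im, Complex.exp_ofReal_mul_I_im, zero_add, mul_one, Real.sin_pi,
    zero_mul, sub_zero, mul_add_one, Real.sin_add_pi] at him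
  rw [stableDensity, rayIntegral_exp_add_mul_cpow_eq hκ hY hx.le, mul_assoc]
  calc _ = π⁻¹ * |_| := by
        rw [← abs_of_pos (inv_pos.2 hpi), ← abs_mul, abs_of_pos (inv_pos.2 hpi)]
        congr 1
        field_simp
    _ ≤ _ := mul_le_mul_of_nonneg_left him (inv_pos.2 hpi).le
    _ = _ := by rw [Real.mul_rpow hx.le hcos.le]; ring

end StableDensity

section FourierInversion

variable {E : Type*} [NormedAddCommGroup E] [InnerProductSpace ℝ E] [FiniteDimensional ℝ E]
  [MeasurableSpace E] [BorelSpace E] {μ : Measure E}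

theorem continuous_fourier_charFun (hμ : Integrable (charFun μ)) :
    Continuous (𝓕 (fun ξ => charFun μ ((2 * π) • ξ))) :=
  VectorFourier.fourierIntegral_continuous Real.continuous_fourierChar continuous_inner
    (hμ.comp_smul (R := (2 * π)) (by positivity))

variable [IsFiniteMeasure μ]

theorem integral_fourier_eq_integral_mul_charFun {h : E → ℂ} (hh : Integrable h) :
    ∫ x, 𝓕 h x ∂μ = ∫ ξ, h ξ * charFun μ (-((2 * π) • ξ)) := by
  have swap := VectorFourier.integral_fourierIntegral_smul_eq_flip (L := innerₗ E) (ν := μ)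
    (g := (1 : E → ℂ)) Real.continuous_fourierChar continuous_inner hh (integrable_const 1)
  simp only [Pi.one_apply, smul_eq_mul, mul_one, flip_innerₗ] at swap
  refine swap.trans (integral_congr_ae (ae_of_all _ fun ξ => ?_))
  simp only [charFun_eq_fourierIntegral', smul_neg, neg_smul, neg_neg]
  rw [inv_smul_smul₀ (by positivity)]

theorem integral_eq_integral_mul_fourier_charFun (hμ : Integrable (charFun μ)) {f : E → ℂ}
    (hf : Continuous f) (hfi : Integrable f) (hfi' : Integrable (𝓕 f)) :
    ∫ x, f x ∂μ = ∫ x, f x * 𝓕 (fun ξ => charFun μ ((2 * π) • ξ)) x := by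
  have hinv : Integrable (𝓕⁻ f) := by
    rw [funext (Real.fourierInv_eq_fourier_neg f)]; exact hfi'.comp_neg
  have selfAdjoint := VectorFourier.integral_fourierIntegral_smul_eq_flip (L := innerₗ E)
    Real.continuous_fourierChar continuous_inner hfi
    (hμ.comp_smul (R := (2 * π)) (by positivity))
  rw [flip_innerₗ] at selfAdjoint
  calc ∫ x, f x ∂μ = ∫ x, 𝓕 (𝓕⁻ f) x ∂μ := by rw [hf.fourier_fourierInv_eq hfi hfi']
    _ = ∫ ξ, 𝓕⁻ f ξ * charFun μ (-((2 * π) • ξ)) :=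
      integral_fourier_eq_integral_mul_charFun hinv
    _ = ∫ ξ, 𝓕 f ξ * charFun μ ((2 * π) • ξ) := by
      rw [← integral_neg_eq_self]
      simp only [Real.fourierInv_eq_fourier_neg, neg_neg, smul_neg]
    _ = ∫ x, f x * 𝓕 (fun ξ => charFun μ ((2 * π) • ξ)) x := selfAdjoint

theorem integral_eq_integral_mul_fourier_charFun_of_contDiff (hμ : Integrable (charFun μ))
    {f : E → ℂ} (hf : ContDiff ℝ (⊤ : ℕ∞) f) (hfc : HasCompactSupport f) :
    ∫ x, f x ∂μ = ∫ x, f x * 𝓕 (fun ξ => charFun μ ((2 * π) • ξ)) x := by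
  refine integral_eq_integral_mul_fourier_charFun hμ hf.continuous
    (hf.continuous.integrable_of_hasCompactSupport hfc) ?_
  simpa only [SchwartzMap.fourier_coe] using! (𝓕 (hfc.toSchwartzMap hf)).integrable (μ := volume)

theorem tendsto_integral_contDiffBump {ν : Measure E} {c : E} {r : ℝ}
    {g : E → ℂ} (hg : LocallyIntegrable g ν) (φ : ℕ → ContDiffBump c) (hin : ∀ n, (φ n).rIn = r)
    (hout : Tendsto (fun n => (φ n).rOut) atTop (𝓝 r)) :
    Tendsto (fun n => ∫ x, (φ n x : ℂ) * g x ∂ν) atTop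
      (𝓝 (∫ x in Metric.closedBall c r, g x ∂ν)) := by
  rw [← integral_indicator Metric.isClosed_closedBall.measurableSet]
  obtain ⟨R, hR⟩ := hout.bddAbove_range
  have mem_upperBounds (n : ℕ) : (φ n).rOut ≤ R := hR (mem_range_self n)
  refine tendsto_integral_of_dominated_convergence
    ((Metric.closedBall c R).indicator fun x => ‖g x‖) (fun n => ?_) ?_ (fun n => ?_) ?_
  · exact (Complex.continuous_ofReal.comp (φ n).continuous).aestronglyMeasurable.mul
      hg.aestronglyMeasurable
  · rw [integrable_indicator_iff Metric.isClosed_closedBall.measurableSet]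
    exact (hg.integrableOn_isCompact (isCompact_closedBall c R)).norm
  · refine ae_of_all _ fun x => ?_
    by_cases hx : x ∈ Metric.closedBall c R
    · rw [indicator_of_mem hx, norm_mul, Complex.norm_real, Real.norm_of_nonneg (φ n).nonneg]
      exact mul_le_of_le_one_left (norm_nonneg _) (φ n).le_one
    · rw [(φ n).zero_of_le_dist ((mem_upperBounds n).trans (not_le.1 hx).le),
        indicator_of_notMem hx]
      simp
  · refine ae_of_all _ fun x => tendsto_const_nhds.congr' ?_
    by_cases hx : x ∈ Metric.closedBall c r
    · refine .of_forall fun n => ?_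
      simp [hx, (φ n).one_of_mem_closedBall (x := x) (by rwa [hin])]
    · filter_upwards [hout.eventually (eventually_lt_nhds (not_le.1 hx))] with n hn
      simp [indicator_of_notMem hx, (φ n).zero_of_le_dist hn.le]

theorem measureReal_closedBall_eq_integral_fourier_charFun (hμ : Integrable (charFun μ)) (c : E)
    {r : ℝ} (hr : 0 < r) :
    (μ.real (Metric.closedBall c r) : ℂ) =
      ∫ x in Metric.closedBall c r, 𝓕 (fun ξ => charFun μ ((2 * π) • ξ)) x := by
  let φ (n : ℕ) : ContDiffBump c := ⟨r, r + 1 / (n + 1), hr, lt_add_of_pos_right r (by positivity)⟩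
  have hout : Tendsto (fun n => (φ n).rOut) atTop (𝓝 r) := by
    simpa [φ] using tendsto_one_div_add_atTop_nhds_zero_nat.const_add r
  have hleft := tendsto_integral_contDiffBump (locallyIntegrable_const (μ := μ) (1 : ℂ)) φ
    (fun _ => rfl) hout
  have hright := tendsto_integral_contDiffBump
    ((continuous_fourier_charFun hμ).locallyIntegrable (μ := volume)) φ (fun _ => rfl) hout
  have hφ (n : ℕ) : ∫ x, (φ n x : ℂ) * 1 ∂μ =
      ∫ x, (φ n x : ℂ) * 𝓕 (fun ξ => charFun μ ((2 * π) • ξ)) x := by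
    simp only [mul_one]
    exact integral_eq_integral_mul_fourier_charFun_of_contDiff hμ
      (Complex.ofRealCLM.contDiff.comp (φ n).contDiff)
      ((φ n).hasCompactSupport.comp_left Complex.ofReal_zero)
  simp only [hφ] at hleft
  simpa [measureReal_def] using tendsto_nhds_unique hleft hright

end FourierInversion

theorem measureReal_Ici_eq_integral_Ioi {μ : Measure ℝ} [IsFiniteMeasure μ] {g : ℝ → ℝ} {a : ℝ}
    (hg : IntegrableOn g (Ioi a)) (h : ∀ b > a, μ.real (Icc a b) = ∫ x in a..b, g x) :
    μ.real (Ici a) = ∫ x in Ioi a, g x := by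
  have hmono : Monotone fun b => Icc a b := fun _ _ hb => Icc_subset_Icc_right hb
  have hmeasure : Tendsto (fun b => μ.real (Icc a b)) atTop (𝓝 (μ.real (Ici a))) := by
    rw [← iUnion_Icc_right]
    exact (ENNReal.tendsto_toReal (measure_ne_top _ _)).comp
      (tendsto_measure_iUnion_atTop hmono)
  refine tendsto_nhds_unique (hmeasure.congr' ?_)
    (intervalIntegral_tendsto_integral_Ioi a hg tendsto_id)
  filter_upwards [eventually_gt_atTop a] with b hb using h b hb

theorem integrableOn_Ioi_of_abs_sub_rpow_le {g : ℝ → ℝ} {c E p r x : ℝ} (hp : 0 < p) (hr : 0 < r)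
    (hx : 0 < x) (hgm : AEStronglyMeasurable g (volume.restrict (Ioi x)))
    (hg : ∀ y > 0, |g y - c * y ^ (-(p + 1))| ≤ E * y ^ (-(r + 1))) :
    IntegrableOn g (Ioi x) := by
  have hmain := (integrableOn_Ioi_rpow_of_lt (a := -(p + 1)) (by linarith) hx).const_mul c
  have herr := (integrableOn_Ioi_rpow_of_lt (a := -(r + 1)) (by linarith) hx).const_mul E
  have hdiff : IntegrableOn (fun y => g y - c * y ^ (-(p + 1))) (Ioi x) := by
    refine herr.mono' (hgm.sub hmain.aestronglyMeasurable) ?_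
    filter_upwards [ae_restrict_mem measurableSet_Ioi] with y hy using hg y (hx.trans hy)
  exact (hdiff.add hmain).congr (ae_of_all _ fun y => sub_add_cancel _ _)

theorem integral_Ioi_neg_rpow {p x : ℝ} (hp : 0 < p) (hx : 0 < x) :
    ∫ y in Ioi x, y ^ (-(p + 1)) = x ^ (-p) / p := by
  rw [integral_Ioi_rpow_of_lt (by linarith) hx, neg_add, neg_add_cancel_right, neg_div_neg_eq]

theorem abs_integral_Ioi_sub_rpow_le {g : ℝ → ℝ} {c E p r x : ℝ} (hp : 0 < p) (hr : 0 < r)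
    (hx : 0 < x) (hgm : IntegrableOn g (Ioi x))
    (hg : ∀ y > 0, |g y - c * y ^ (-(p + 1))| ≤ E * y ^ (-(r + 1))) :
    |(∫ y in Ioi x, g y) - c / p * x ^ (-p)| ≤ E / r * x ^ (-r) := by
  have hmain := (integrableOn_Ioi_rpow_of_lt (a := -(p + 1)) (by linarith) hx).const_mul c
  have herr := (integrableOn_Ioi_rpow_of_lt (a := -(r + 1)) (by linarith) hx).const_mul E
  have bound : ‖∫ y in Ioi x, (g y - c * y ^ (-(p + 1)))‖ ≤ ∫ y in Ioi x, E * y ^ (-(r + 1)) := by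
    refine norm_integral_le_of_norm_le herr ?_
    filter_upwards [ae_restrict_mem measurableSet_Ioi] with y hy using hg y (hx.trans hy)
  rw [integral_sub hgm hmain, integral_const_mul, integral_const_mul, integral_Ioi_neg_rpow hp hx,
    integral_Ioi_neg_rpow hr hx, Real.norm_eq_abs] at bound
  simpa only [div_mul_eq_mul_div, mul_div_assoc] using bound

theorem integrable_of_measureReal_abs_gt_le_rpow {α : Type*} [MeasurableSpace α] {μ : Measure α}
    [IsFiniteMeasure μ] {f : α → ℝ} {B p : ℝ} (hf : AEMeasurable f μ) (hp : 1 < p)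
    (h : ∀ r > 0, μ.real {a | r < |f a|} ≤ B * r ^ (-p)) : Integrable f μ := by
  refine ⟨hf.aestronglyMeasurable, ?_⟩
  rw [hasFiniteIntegral_iff_norm,
    lintegral_eq_lintegral_meas_lt μ (ae_of_all _ fun a => norm_nonneg _) hf.norm,
    ← Ioc_union_Ioi_eq_Ioi zero_le_one]
  refine (lintegral_union_le _ _ _).trans_lt (ENNReal.add_lt_top.2 ⟨?_, ?_⟩)
  · refine (setLIntegral_mono measurable_const fun r _ => measure_mono (subset_univ _)).trans_lt ?_
    simp [measure_lt_top]
  · refine (setLIntegral_mono' measurableSet_Ioi fun r hr => ?_).trans_lt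
      ((integrableOn_Ioi_rpow_of_lt (a := -p) (by linarith) one_pos).const_mul B).lintegral_lt_top
    rw [← ofReal_measureReal]
    exact ENNReal.ofReal_le_ofReal (h r (one_pos.trans hr))

theorem integrable_id_of_norm_one_sub_charFun_le {μ : Measure ℝ} [IsProbabilityMeasure μ]
    {A p : ℝ} (hp : 1 < p) (h : ∀ t, ‖1 - charFun μ t‖ ≤ A * |t| ^ p) : Integrable id μ := by
  have hA : 0 ≤ A := by simpa using (norm_nonneg _).trans (h 1)
  refine integrable_of_measureReal_abs_gt_le_rpow (B := 2 * A * 2 ^ p) aemeasurable_id hp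
    fun r hr => ?_
  have hbound : ‖∫ t in (-2 * r⁻¹)..(2 * r⁻¹), 1 - charFun μ t‖ ≤
      A * (2 * r⁻¹) ^ p * |2 * r⁻¹ - -2 * r⁻¹| := by
    refine intervalIntegral.norm_integral_le_of_norm_le_const fun t ht => (h t).trans ?_
    rw [uIoc_of_le (by rw [neg_mul]; exact neg_le_self (by positivity)), neg_mul] at ht
    gcongr
    exact abs_le.2 ⟨ht.1.le, ht.2⟩
  calc μ.real {x | r < |x|} ≤ 2⁻¹ * r * (A * (2 * r⁻¹) ^ p * |2 * r⁻¹ - -2 * r⁻¹|) :=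
        (measureReal_abs_gt_le_integral_charFun hr).trans (by gcongr)
    _ = 2 * A * 2 ^ p * r ^ (-p) := by
      rw [neg_mul, sub_neg_eq_add, abs_of_pos (by positivity),
        Real.mul_rpow two_pos.le (by positivity), Real.inv_rpow hr.le, ← Real.rpow_neg hr.le]
      field_simp
      ring

theorem integral_eq_two_mul_re_integral_Ioi {h : ℝ → ℂ} (hi : Integrable h)
    (hconj : ∀ t, h (-t) = starRingEnd ℂ (h t)) :
    ∫ t, h t = (2 * (∫ t : ℝ in Ioi 0, h t).re : ℝ) := by
  have hIic : ∫ t in Iic 0, h t = starRingEnd ℂ (∫ t : ℝ in Ioi 0, h t) := by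
    rw [← integral_conj, ← neg_zero, ← integral_comp_neg_Ioi, neg_zero]
    simp only [hconj]
  rw [← intervalIntegral.integral_Iic_add_Ioi hi.integrableOn hi.integrableOn, hIic, add_comm,
    Complex.add_conj]

theorem fourier_charFun_eq_ofReal {μ : Measure ℝ} (hμ : Integrable (charFun μ)) (x : ℝ) :
    𝓕 (fun ξ : ℝ => charFun μ ((2 * π) • ξ)) x =
      (π⁻¹ * (∫ t : ℝ in Ioi 0, Complex.exp (x * t * Complex.I) * charFun μ (-t)).re : ℝ) := by
  have hint : Integrable fun t : ℝ => Complex.exp (x * t * Complex.I) * charFun μ (-t) := by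
    refine hμ.comp_neg.bdd_mul (c := 1) (by fun_prop) (ae_of_all _ fun t => ?_)
    rw [← Complex.ofReal_mul, Complex.norm_exp_ofReal_mul_I]
  have hconj (t : ℝ) : Complex.exp (x * (-t : ℝ) * Complex.I) * charFun μ (-(-t)) =
      starRingEnd ℂ (Complex.exp (x * t * Complex.I) * charFun μ (-t)) := by
    rw [map_mul, ← charFun_neg, ← Complex.exp_conj]
    simp
  have scale := Measure.integral_comp_mul_left
    (fun t : ℝ => Complex.exp (-(x * t) * Complex.I) * charFun μ t) (2 * π)
  calc 𝓕 (fun ξ : ℝ => charFun μ ((2 * π) • ξ)) x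
      = ∫ ξ, Complex.exp (-(x * (2 * π * ξ : ℝ)) * Complex.I) *
          charFun μ (2 * π * ξ) := by
        rw [Real.fourier_real_eq_integral_exp_smul]
        refine integral_congr_ae (ae_of_all _ fun ξ => ?_)
        simp only [smul_eq_mul]
        push_cast
        ring_nf
    _ = (2 * π)⁻¹ • ∫ t : ℝ, Complex.exp (x * t * Complex.I) * charFun μ (-t) := by
        rw [scale, abs_of_pos (by positivity), ← integral_neg_eq_self]
        simp
    _ = _ := by
        rw [integral_eq_two_mul_re_integral_Ioi hint hconj, Complex.real_smul,
          ← Complex.ofReal_mul, mul_inv, mul_assoc, mul_left_comm, inv_mul_cancel_left₀ two_ne_zero]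

/-- `μ` is the strictly `Y`-stable law on `ℝ` that is totally skewed to the right and has scale
`κ`: its Laplace transform `s ↦ exp (κ * s ^ Y)` is prescribed on the imaginary axis `s = -i t`. -/
def IsSpectrallyPositiveStable (μ : Measure ℝ) (κ Y : ℝ) : Prop :=
  ∀ t : ℝ, charFun μ t = Complex.exp (κ * (-(t * Complex.I)) ^ (Y : ℂ))

theorem neg_ofReal_mul_I_cpow {Y : ℝ} (hY : Y ≠ 0) (t : ℝ) :
    (-(t * Complex.I)) ^ (Y : ℂ) = (|t| ^ Y : ℝ) *
      (Real.cos (π * Y / 2) - Complex.I * Real.sign t * Real.sin (π * Y / 2)) := by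
  have hpi := Real.pi_pos
  rcases lt_trichotomy t 0 with ht | rfl | ht
  · have polar : -(t * Complex.I) = (-t : ℝ) * Complex.exp ((π / 2 : ℝ) * Complex.I) := by
      simp [Complex.exp_pi_div_two_mul_I]
    rw [polar, ofReal_mul_exp_cpow (neg_pos.2 ht) ⟨by linarith, by linarith⟩, Complex.exp_mul_I,
      Real.sign_of_neg ht, abs_of_neg ht]
    push_cast
    ring_nf
  · simp [Real.zero_rpow hY, hY]
  · have polar : -(t * Complex.I) = t * Complex.exp ((-(π / 2) : ℝ) * Complex.I) := by
      simp [Complex.exp_neg, Complex.exp_pi_div_two_mul_I]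
    rw [polar, ofReal_mul_exp_cpow ht ⟨by linarith, by linarith⟩, Complex.exp_mul_I,
      Real.sign_of_pos ht, abs_of_pos ht, ← Complex.ofReal_cos, ← Complex.ofReal_sin,
      mul_neg, Real.cos_neg, Real.sin_neg]
    push_cast
    ring_nf

theorem re_neg_ofReal_mul_I_cpow {Y : ℝ} (hY : Y ≠ 0) (t : ℝ) :
    ((-(t * Complex.I)) ^ (Y : ℂ)).re = |t| ^ Y * Real.cos (π * Y / 2) := by
  rw [neg_ofReal_mul_I_cpow hY, Complex.re_ofReal_mul]
  simp [-Complex.ofReal_cos, -Complex.ofReal_sin]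

theorem cos_pi_mul_div_two_neg {Y : ℝ} (hY : Y ∈ Ioo (1 : ℝ) 3) :
    Real.cos (π * Y / 2) < 0 :=
  Real.cos_neg_of_pi_div_two_lt_of_lt (by nlinarith [hY.1, Real.pi_pos])
    (by nlinarith [hY.2, Real.pi_pos])

theorem isSpectrallyPositiveStable_map {Ω : Type*} [MeasurableSpace Ω] {P : Measure Ω}
    {U : Ω → ℝ} {κ Y : ℝ} (hU : AEMeasurable U P) (hY : Y ≠ 0)
    (hchar : ∀ u : ℝ, ∫ ω, Complex.exp (Complex.I * u * U ω) ∂P =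
      Complex.exp ((κ * |u| ^ Y : ℝ) * (Real.cos (π * Y / 2) -
        Complex.I * Real.sign u * Real.sin (π * Y / 2)))) :
    IsSpectrallyPositiveStable (P.map U) κ Y := by
  intro t
  rw [charFun_apply_real, integral_map hU (by fun_prop), neg_ofReal_mul_I_cpow hY, ← mul_assoc,
    ← Complex.ofReal_mul, ← hchar]
  refine integral_congr_ae (ae_of_all _ fun ω => ?_)
  ring_nf

namespace IsSpectrallyPositiveStable

variable {μ : Measure ℝ} {κ Y : ℝ}

theorem norm_charFun (hμ : IsSpectrallyPositiveStable μ κ Y) (hY : Y ≠ 0) (t : ℝ) :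
    ‖charFun μ t‖ = Real.exp (κ * (|t| ^ Y * Real.cos (π * Y / 2))) := by
  rw [hμ, Complex.norm_exp, Complex.re_ofReal_mul, re_neg_ofReal_mul_I_cpow hY]

theorem integrable_charFun [IsFiniteMeasure μ] (hμ : IsSpectrallyPositiveStable μ κ Y)
    (hκ : 0 < κ) (hY : Y ∈ Ioo (1 : ℝ) 3) : Integrable (charFun μ) := by
  have half := integrableOn_rpow_mul_exp_neg_mul_rpow (s := 0) (p := Y) (by norm_num)
    (by linarith [hY.1]) (mul_pos hκ (neg_pos.2 (cos_pi_mul_div_two_neg hY)))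
  have whole := (integrable_fun_norm_addHaar volume (E := ℝ) (f := fun s : ℝ =>
    Real.exp (κ * Real.cos (π * Y / 2) * s ^ Y))).2 (by simpa using half)
  refine (integrable_norm_iff (by fun_prop)).1 (whole.congr (ae_of_all _ fun t => ?_))
  simp only [hμ.norm_charFun (show Y ≠ 0 by linarith [hY.1]), Real.norm_eq_abs]
  ring_nf

theorem norm_one_sub_charFun_le (hμ : IsSpectrallyPositiveStable μ κ Y) (hκ : 0 ≤ κ)
    (hY : Y ∈ Ioo (1 : ℝ) 3) (t : ℝ) : ‖1 - charFun μ t‖ ≤ κ * |t| ^ Y := by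
  have hre : (κ * (-(t * Complex.I)) ^ (Y : ℂ)).re ≤ 0 := by
    rw [Complex.re_ofReal_mul, re_neg_ofReal_mul_I_cpow (by linarith [hY.1])]
    exact mul_nonpos_of_nonneg_of_nonpos hκ
      (mul_nonpos_of_nonneg_of_nonpos (by positivity) (cos_pi_mul_div_two_neg hY).le)
  rw [hμ, norm_sub_rev]
  refine (norm_exp_sub_one_le_of_re_nonpos hre).trans (le_of_eq ?_)
  rw [norm_mul, Complex.norm_cpow_real, Complex.norm_real, Real.norm_of_nonneg hκ]
  simp

theorem fourier_charFun_eq_stableDensity (hμ : IsSpectrallyPositiveStable μ κ Y)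
    (hint : Integrable (charFun μ)) (x : ℝ) :
    𝓕 (fun ξ : ℝ => charFun μ ((2 * π) • ξ)) x = stableDensity κ Y x := by
  rw [fourier_charFun_eq_ofReal hint, stableDensity, rayIntegral, integral_mul_const]
  simp only [Complex.ofReal_div, Complex.ofReal_ofNat, Complex.exp_pi_div_two_mul_I,
    Complex.mul_I_im, hμ _]
  congr 4
  ext t
  rw [← Complex.exp_add]
  simp only [Complex.ofReal_neg, neg_mul, neg_neg]
  ring_nf

theorem continuous_stableDensity (hμ : IsSpectrallyPositiveStable μ κ Y)
    (hint : Integrable (charFun μ)) : Continuous (stableDensity κ Y) := by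
  have hcont := Complex.continuous_re.comp (continuous_fourier_charFun hint)
  refine hcont.congr fun x => ?_
  rw [Function.comp_apply, hμ.fourier_charFun_eq_stableDensity hint, Complex.ofReal_re]

theorem measureReal_Icc_eq_integral_stableDensity [IsFiniteMeasure μ]
    (hμ : IsSpectrallyPositiveStable μ κ Y) (hint : Integrable (charFun μ)) {a b : ℝ}
    (hab : a < b) : μ.real (Icc a b) = ∫ x in a..b, stableDensity κ Y x := by
  have ball := measureReal_closedBall_eq_integral_fourier_charFun hint ((a + b) / 2)
    (r := (b - a) / 2) (by linarith)
  rw [Real.closedBall_eq_Icc, show (a + b) / 2 - (b - a) / 2 = a by ring,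
    show (a + b) / 2 + (b - a) / 2 = b by ring] at ball
  simp only [hμ.fourier_charFun_eq_stableDensity hint, integral_complex_ofReal] at ball
  rw [intervalIntegral.integral_of_le hab.le, ← integral_Icc_eq_integral_Ioc]
  exact_mod_cast ball

theorem exists_abs_measureReal_Ici_sub_le [IsFiniteMeasure μ]
    (hμ : IsSpectrallyPositiveStable μ κ Y) (hκ : 0 < κ) (hY : Y ∈ Ioo (1 : ℝ) 2) :
    ∃ A, ∀ x > 0, |μ.real (Ici x) -
        -(κ * Real.Gamma (Y + 1) * Real.sin (π * Y) / π) / Y * x ^ (-Y)| ≤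
      A * x ^ (-(2 * Y)) := by
  have hY₀ : 0 < Y := by linarith [hY.1]
  have hint := hμ.integrable_charFun hκ ⟨hY.1, by linarith [hY.2]⟩
  obtain ⟨E, hE⟩ := exists_abs_stableDensity_sub_le hκ hY
  refine ⟨E / (2 * Y), fun x hx => ?_⟩
  have htail := integrableOn_Ioi_of_abs_sub_rpow_le hY₀ (by positivity) hx
    (hμ.continuous_stableDensity hint).aestronglyMeasurable hE
  rw [measureReal_Ici_eq_integral_Ioi htail fun b hb =>
    hμ.measureReal_Icc_eq_integral_stableDensity hint hb]
  exact abs_integral_Ioi_sub_rpow_le hY₀ (by positivity) hx htail hE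

theorem integrable_id [IsProbabilityMeasure μ] (hμ : IsSpectrallyPositiveStable μ κ Y)
    (hκ : 0 ≤ κ) (hY : Y ∈ Ioo (1 : ℝ) 3) : Integrable id μ :=
  integrable_id_of_norm_one_sub_charFun_le hY.1 (hμ.norm_one_sub_charFun_le hκ hY)

theorem integrable_of_map {Ω : Type*} [MeasurableSpace Ω] {P : Measure Ω} [IsProbabilityMeasure P]
    {V : Ω → ℝ} (hV : AEMeasurable V P) (hμ : IsSpectrallyPositiveStable (P.map V) κ Y)
    (hκ : 0 ≤ κ) (hY : Y ∈ Ioo (1 : ℝ) 3) : Integrable V P :=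
  have := Measure.isProbabilityMeasure_map hV
  (hμ.integrable_id hκ hY).comp_aemeasurable hV

end IsSpectrallyPositiveStable

theorem abs_neg_rpow_sub_neg_rpow_le {p q a b : ℝ} (hp : 0 ≤ p) (hq : 0 < q) (ha : q ≤ a)
    (hb : q ≤ b) : |a ^ (-p) - b ^ (-p)| ≤ p * q ^ (-(p + 1)) * |a - b| := by
  refine Convex.norm_image_sub_le_of_norm_hasDerivWithin_le (f := fun x : ℝ => x ^ (-p))
    (fun x hx => (Real.hasDerivAt_rpow_const
      (Or.inl (hq.trans_le hx).ne')).hasDerivWithinAt) (fun x hx => ?_) (convex_Ici q) hb ha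
  have hx₀ : 0 < x := hq.trans_le hx
  rw [norm_mul, norm_neg, Real.norm_of_nonneg hp, Real.norm_of_nonneg (by positivity), ← neg_add']
  gcongr ?_ * ?_
  exact Real.rpow_le_rpow_of_nonpos hq hx (by linarith)

theorem measurable_measure_Ici (μ : Measure ℝ) : Measurable fun x => μ (Ici x) :=
  Antitone.measurable fun _ _ h => measure_mono (Ici_subset_Ici.2 h)

section Independence

variable {Ω : Type*} [MeasurableSpace Ω] {P : Measure Ω} [IsProbabilityMeasure P] {U V : Ω → ℝ}
  {T : ℝ → ℝ}

theorem measureReal_comp_le_eq_integral_of_indepFun (hU : AEMeasurable U P) (hV : AEMeasurable V P)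
    (hUV : IndepFun U V P) (hT : Measurable T) :
    P.real {ω | T (V ω) ≤ U ω} = ∫ ω, (P.map U).real (Ici (T (V ω))) ∂P := by
  have hset : MeasurableSet {x : ℝ × ℝ | T x.2 ≤ x.1} :=
    measurableSet_le (hT.comp measurable_snd) measurable_fst
  have htail : Measurable fun v => P.map U (Ici (T v)) := (measurable_measure_Ici _).comp hT
  have hlaw := (indepFun_iff_map_prod_eq_prod_map_map hU hV).1 hUV
  have hprob : P {ω | T (V ω) ≤ U ω} = ∫⁻ ω, P.map U (Ici (T (V ω))) ∂P := by
    calc P {ω | T (V ω) ≤ U ω} = P.map (fun ω => (U ω, V ω)) {x : ℝ × ℝ | T x.2 ≤ x.1} :=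
          (Measure.map_apply_of_aemeasurable (hU.prodMk hV) hset).symm
      _ = ∫⁻ v, P.map U (Ici (T v)) ∂P.map V := by
          rw [hlaw, Measure.prod_apply_symm hset]; rfl
      _ = _ := lintegral_map' htail.aemeasurable hV
  rw [measureReal_def, hprob]
  exact (integral_toReal (htail.comp_aemeasurable hV)
    (ae_of_all _ fun _ => measure_lt_top _ _)).symm

theorem abs_measureReal_comp_le_sub_rpow_le_of_indepFun {c A p r q b L : ℝ} (hp : 0 ≤ p)
    (hr : 0 ≤ r) (hq : 0 < q) (hU : AEMeasurable U P) (hV : Integrable V P) (hUV : IndepFun U V P)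
    (htail : ∀ x > 0, |(P.map U).real (Ici x) - c * x ^ (-p)| ≤ A * x ^ (-r))
    (hT : Measurable T) (hqT : ∀ v, q ≤ T v) (hqb : q ≤ b) (hTb : ∀ v, |T v - b| ≤ L * |v|) :
    |P.real {ω | T (V ω) ≤ U ω} - c * b ^ (-p)| ≤
      A * q ^ (-r) + |c| * (p * q ^ (-(p + 1)) * (L * ∫ ω, |V ω| ∂P)) := by
  have hA : 0 ≤ A := by simpa using (abs_nonneg _).trans (htail 1 one_pos)
  have hpoint (v : ℝ) : |(P.map U).real (Ici (T v)) - c * b ^ (-p)| ≤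
      A * q ^ (-r) + |c| * (p * q ^ (-(p + 1)) * (L * |v|)) := by
    have herror := (htail (T v) (hq.trans_le (hqT v))).trans
      (mul_le_mul_of_nonneg_left (Real.rpow_le_rpow_of_nonpos hq (hqT v) (neg_nonpos.2 hr)) hA)
    have hshift : |c * T v ^ (-p) - c * b ^ (-p)| ≤ |c| * (p * q ^ (-(p + 1)) * (L * |v|)) := by
      rw [← mul_sub, abs_mul]
      gcongr
      exact (abs_neg_rpow_sub_neg_rpow_le hp hq (hqT v) hqb).trans (by gcongr; exact hTb v)
    exact (abs_sub_le _ _ _).trans (add_le_add herror hshift)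
  have hint : Integrable (fun ω => (P.map U).real (Ici (T (V ω)))) P := by
    have := Measure.isProbabilityMeasure_map hU
    have htailT : Measurable fun v => (P.map U).real (Ici (T v)) :=
      ((measurable_measure_Ici _).comp hT).ennreal_toReal
    refine .of_bound (htailT.comp_aemeasurable hV.aemeasurable).aestronglyMeasurable 1
      (ae_of_all _ fun ω => ?_)
    rw [Real.norm_of_nonneg measureReal_nonneg]
    exact measureReal_le_one
  have hbound : Integrable
      (fun ω => A * q ^ (-r) + |c| * (p * q ^ (-(p + 1)) * (L * |V ω|))) P := by
    fun_prop
  calc |P.real {ω | T (V ω) ≤ U ω} - c * b ^ (-p)|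
      = ‖∫ ω, ((P.map U).real (Ici (T (V ω))) - c * b ^ (-p)) ∂P‖ := by
        rw [measureReal_comp_le_eq_integral_of_indepFun hU hV.aemeasurable hUV hT,
          integral_sub hint (integrable_const _)]
        simp
    _ ≤ ∫ ω, (A * q ^ (-r) + |c| * (p * q ^ (-(p + 1)) * (L * |V ω|))) ∂P :=
        norm_integral_le_of_norm_le hbound (ae_of_all _ fun ω => hpoint (V ω))
    _ = _ := by
        rw [integral_add (integrable_const _) (by fun_prop)]
        simp [integral_const_mul]

end Independence

/-- The threshold that `u` must reach for `v ≤ u` and `w ≤ M * u + G * v` to hold together. -/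
noncomputable def skewThreshold (M G w v : ℝ) : ℝ := max v ((w - G * v) / M)

section SkewThreshold

variable {M G w : ℝ}

theorem measurable_skewThreshold : Measurable (skewThreshold M G w) := by
  unfold skewThreshold; fun_prop

theorem skewThreshold_le_iff (hM : 0 < M) {u v : ℝ} :
    skewThreshold M G w v ≤ u ↔ v ≤ u ∧ w ≤ M * u + G * v := by
  rw [skewThreshold, max_le_iff, div_le_iff₀' hM, sub_le_iff_le_add]

theorem div_add_le_skewThreshold (hM : 0 < M) (hG : 0 ≤ G) (v : ℝ) :
    w / (M + G) ≤ skewThreshold M G w v := by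
  obtain ⟨hv, hw⟩ := (skewThreshold_le_iff hM).1 (le_refl (skewThreshold M G w v))
  rw [div_le_iff₀' (by positivity), add_mul]
  exact hw.trans (by gcongr)

theorem abs_skewThreshold_sub_le (hM : 0 < M) (hG : 0 ≤ G) (hw : 0 ≤ w) (v : ℝ) :
    |skewThreshold M G w v - w / M| ≤ (1 + G / M) * |v| := by
  have hslope : 0 ≤ G / M := by positivity
  have hwM : 0 ≤ w / M := by positivity
  have hline : (w - G * v) / M = w / M - G / M * v := by ring
  rw [skewThreshold, hline]
  rcases le_total v (w / M - G / M * v) with h | h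
  · rw [max_eq_right h, sub_sub_cancel_left, abs_neg, abs_mul, abs_of_nonneg hslope]
    nlinarith [abs_nonneg v]
  · have hv : 0 ≤ v := by nlinarith
    rw [max_eq_left h, abs_of_nonneg hv, abs_le]
    constructor <;> nlinarith

theorem abs_measureReal_le_and_le_add_sub_rpow_le_of_indepFun {Ω : Type*} [MeasurableSpace Ω]
    {P : Measure Ω} [IsProbabilityMeasure P] {U V : Ω → ℝ} {c A p r : ℝ} (hM : 0 < M) (hG : 0 ≤ G)
    (hw : 0 < w) (hp : 0 ≤ p) (hr : 0 ≤ r) (hU : AEMeasurable U P) (hV : Integrable V P)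
    (hUV : IndepFun U V P)
    (htail : ∀ x > 0, |(P.map U).real (Ici x) - c * x ^ (-p)| ≤ A * x ^ (-r)) :
    |P.real {ω | V ω ≤ U ω ∧ w ≤ M * U ω + G * V ω} - c * (w / M) ^ (-p)| ≤
      A * (w / (M + G)) ^ (-r) +
        |c| * (p * (w / (M + G)) ^ (-(p + 1)) * ((1 + G / M) * ∫ ω, |V ω| ∂P)) := by
  simp only [← skewThreshold_le_iff hM]
  exact abs_measureReal_comp_le_sub_rpow_le_of_indepFun hp hr (by positivity) hU hV hUV htail
    measurable_skewThreshold (div_add_le_skewThreshold hM hG)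
    (div_le_div_of_nonneg_left hw.le hM (le_add_of_nonneg_right hG))
    (abs_skewThreshold_sub_le hM hG hw.le)

end SkewThreshold

theorem gamma_neg_pos {Y : ℝ} (hY : Y ∈ Ioo (1 : ℝ) 2) : 0 < Real.Gamma (-Y) := by
  have shift₁ := Real.Gamma_add_one (s := -Y) (by linarith [hY.1])
  have shift₂ := Real.Gamma_add_one (s := -Y + 1) (by linarith [hY.1])
  have hpos : 0 < (-Y + 1) * -Y * Real.Gamma (-Y) := by
    rw [mul_assoc, ← shift₁, ← shift₂]
    exact Real.Gamma_pos_of_pos (by linarith [hY.2])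
  exact pos_of_mul_pos_right hpos (by nlinarith [hY.1])

theorem gamma_neg_mul_gamma_add_one_mul_sin {Y : ℝ} (hY : Real.sin (π * Y) ≠ 0) :
    Real.Gamma (-Y) * Real.Gamma (Y + 1) * Real.sin (π * Y) = -π := by
  have reflection := Real.Gamma_mul_Gamma_one_sub (-Y)
  rw [sub_neg_eq_add, add_comm 1 Y, mul_neg, Real.sin_neg] at reflection
  rw [reflection, div_neg, neg_mul, div_mul_cancel₀ _ hY]

theorem mul_div_neg_rpow_le {w s a b : ℝ} (hw : 1 ≤ w) (hs : 0 ≤ s) (hab : b + 1 ≤ a) :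
    w * (w / s) ^ (-a) ≤ s ^ a * w ^ (-b) := by
  have hw₀ : 0 < w := one_pos.trans_le hw
  calc w * (w / s) ^ (-a) = s ^ a * w ^ (1 - a) := by
        rw [Real.div_rpow hw₀.le hs, Real.rpow_neg hs, div_inv_eq_mul, sub_eq_add_neg,
          Real.rpow_add hw₀, Real.rpow_one]
        ring
    _ ≤ s ^ a * w ^ (-b) := by
        gcongr ?_ * ?_
        exact Real.rpow_le_rpow_of_exponent_le hw (by linarith)

theorem IsSpectrallyPositiveStable.exists_abs_measureReal_Ici_gamma_neg_sub_le {μ : Measure ℝ}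
    [IsFiniteMeasure μ] {C Y : ℝ}
    (hμ : IsSpectrallyPositiveStable μ (C * Real.Gamma (-Y)) Y) (hC : 0 < C)
    (hY : Y ∈ Ioo (1 : ℝ) 2) :
    ∃ A, ∀ x > 0, |μ.real (Ici x) - C / Y * x ^ (-Y)| ≤ A * x ^ (-(2 * Y)) := by
  have hsin : Real.sin (π * Y) ≠ 0 := by
    rw [← neg_ne_zero, ← Real.sin_sub_pi]
    exact (Real.sin_pos_of_pos_of_lt_pi (by nlinarith [hY.1, Real.pi_pos])
      (by nlinarith [hY.2, Real.pi_pos])).ne'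
  have hconst : -(C * Real.Gamma (-Y) * Real.Gamma (Y + 1) * Real.sin (π * Y) / π) =
      C := by
    rw [mul_assoc C, mul_assoc C, gamma_neg_mul_gamma_add_one_mul_sin hsin]
    field_simp [Real.pi_ne_zero]
  simpa only [hconst] using
    hμ.exists_abs_measureReal_Ici_sub_le (mul_pos hC (gamma_neg_pos hY)) hY

theorem stmt5_general {Ω : Type*} [MeasurableSpace Ω] {P : Measure Ω} [IsProbabilityMeasure P]
    {Y C M G : ℝ} (hY : Y ∈ Ioo (1 : ℝ) 2) (hC : 0 < C) (hM : 0 < M) (hG : 0 ≤ G) {U V : Ω → ℝ}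
    (hU : AEMeasurable U P) (hV : Integrable V P) (hIndep : IndepFun U V P)
    (hstable : IsSpectrallyPositiveStable (P.map U) (C * Real.Gamma (-Y)) Y) :
    ∃ K > 0, ∀ w ≥ 1,
      |w * ((P {ω | V ω ≤ U ω ∧ w ≤ M * U ω + G * V ω}).toReal - C * M ^ Y / (Y * w ^ Y))| ≤
        K * w ^ (-Y) := by
  have hY₀ : 0 < Y := by linarith [hY.1]
  obtain ⟨A, htail⟩ := hstable.exists_abs_measureReal_Ici_gamma_neg_sub_le hC hY
  have hA : 0 ≤ A := by simpa using (abs_nonneg _).trans (htail 1 one_pos)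
  set J := (1 + G / M) * ∫ ω, |V ω| ∂P with hJ_def
  have : 0 ≤ J := mul_nonneg (by positivity) (integral_nonneg fun _ => abs_nonneg _)
  refine ⟨A * (M + G) ^ (2 * Y) + C * ((M + G) ^ (Y + 1) * J) + 1, by positivity, fun w hw => ?_⟩
  have hw₀ : 0 < w := one_pos.trans_le hw
  have hmain : C * M ^ Y / (Y * w ^ Y) = C / Y * (w / M) ^ (-Y) := by
    rw [Real.rpow_neg (by positivity), Real.div_rpow hw₀.le hM.le, inv_div, div_mul_div_comm]
  have hprob := abs_measureReal_le_and_le_add_sub_rpow_le_of_indepFun hM hG hw₀ hY₀.le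
    (by positivity) hU hV hIndep htail
  rw [← hJ_def, abs_of_pos (div_pos hC hY₀)] at hprob
  rw [hmain, ← measureReal_def, abs_mul, abs_of_pos hw₀]
  calc w * _ ≤ w * (A * (w / (M + G)) ^ (-(2 * Y)) +
          C / Y * (Y * (w / (M + G)) ^ (-(Y + 1)) * J)) := by gcongr
    _ = A * (w * (w / (M + G)) ^ (-(2 * Y))) + C * (w * (w / (M + G)) ^ (-(Y + 1))) * J := by
        field_simp
    _ ≤ A * ((M + G) ^ (2 * Y) * w ^ (-Y)) + C * ((M + G) ^ (Y + 1) * w ^ (-Y)) * J := by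
        gcongr A * ?_ + C * ?_ * J
        · exact mul_div_neg_rpow_le hw (by positivity) (by linarith [hY.1])
        · exact mul_div_neg_rpow_le hw (by positivity) le_rfl
    _ ≤ (A * (M + G) ^ (2 * Y) + C * ((M + G) ^ (Y + 1) * J) + 1) * w ^ (-Y) := by
        linarith [Real.rpow_pos_of_pos hw₀ (-Y)]

/-- First-order tail estimate for the skewed combination `M·U + G·V` on `{U ≥ V}`. -/
theorem stmt5
    {Ω : Type} [MeasurableSpace Ω] (P : Measure Ω) [IsProbabilityMeasure P]
    (Y C M G : ℝ) (hY : Y ∈ Set.Ioo (1:ℝ) 2) (hC : 0 < C) (hM : 1 < M) (hG : 0 < G)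
    (U V : Ω → ℝ) (hU : Measurable U) (hV : Measurable V)
    (hIndep : IndepFun U V P)
    (hUchar : ∀ u : ℝ, (∫ ω, Complex.exp (Complex.I * u * (U ω)) ∂P) =
      Complex.exp (((C * Real.Gamma (-Y) * |u| ^ Y : ℝ) : ℂ) *
        (((Real.cos (Real.pi * Y / 2) : ℝ) : ℂ)
          - Complex.I * ((Real.sign u : ℝ) : ℂ) * ((Real.sin (Real.pi * Y / 2) : ℝ) : ℂ))))
    (hVchar : ∀ u : ℝ, (∫ ω, Complex.exp (Complex.I * u * (V ω)) ∂P) =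
      Complex.exp (((C * Real.Gamma (-Y) * |u| ^ Y : ℝ) : ℂ) *
        (((Real.cos (Real.pi * Y / 2) : ℝ) : ℂ)
          - Complex.I * ((Real.sign u : ℝ) : ℂ) * ((Real.sin (Real.pi * Y / 2) : ℝ) : ℂ)))) :
    ∃ K > (0:ℝ), ∃ w₀ > (0:ℝ), ∀ w ≥ w₀,
      |w * ((P {ω | V ω ≤ U ω ∧ w ≤ M * U ω + G * V ω}).toReal - C * M ^ Y / (Y * w ^ Y))|
        ≤ K * (w ^ (1 - 2*Y) + w ^ (-Y)) := by
  have hVstable := isSpectrallyPositiveStable_map hV.aemeasurable (by linarith [hY.1]) hVchar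
  have hVint := hVstable.integrable_of_map hV.aemeasurable (mul_pos hC (gamma_neg_pos hY)).le
    ⟨hY.1, by linarith [hY.2]⟩
  obtain ⟨K, hK, hbound⟩ := stmt5_general hY hC (one_pos.trans hM) hG.le hU.aemeasurable hVint
    hIndep (isSpectrallyPositiveStable_map hU.aemeasurable (by linarith [hY.1]) hUchar)
  exact ⟨K, hK, 1, one_pos, fun w hw => (hbound w hw).trans (mul_le_mul_of_nonneg_left
    (le_add_of_nonneg_left (Real.rpow_nonneg (zero_le_one.trans hw) _)) hK.le)⟩
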